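/- Let A : ℝⁿ → ℝⁿ and B : ℝᵐ → ℝⁿ be linear maps such that the range of B is invariant under A, i.e., A(Im B) ⊆ Im B. Let u : ℝ → ℝᵐ be continuous and let x : ℝ → ℝⁿ be differentiable with x′(t) = A(x(t)) + B(u(t)) for all t. If x(0) ∈ Im B, then x(t) ∈ Im B for all t ≥ 0. -/

import Mathlib

/-- A curve in a finite-dimensional space whose velocity is `A (x t)` modulo an `A`-invariant
subspace `W` stays in `W` in forward time if it starts there. -/
theorem Submodule.mem_of_hasDerivAt_of_invariant {E : Type*} [NormedAddCommGroup E]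
    [NormedSpace ℝ E] [FiniteDimensional ℝ E] {W : Submodule ℝ E} {A : E →ₗ[ℝ] E}
    (hA : ∀ v ∈ W, A v ∈ W) {x w : ℝ → E} (hw : ∀ t, w t ∈ W)
    (hx : ∀ t, HasDerivAt x (A (x t) + w t) t) {a t : ℝ} (ha : x a ∈ W) (hat : a ≤ t) :
    x t ∈ W := by
  obtain ⟨V, hV⟩ := W.exists_isCompl
  let Q : E →L[ℝ] E := LinearMap.toContinuousLinearMap (V.projection W hV.symm)
  let A' : E →L[ℝ] E := LinearMap.toContinuousLinearMap A
  have hQ : ∀ v, Q v = 0 ↔ v ∈ W := fun v => Submodule.projection_apply_eq_zero_iff hV.symm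
  have hQQ : ∀ v, Q (Q v) = Q v := fun v =>
    Submodule.projection_apply_left hV.symm ⟨_, Submodule.projection_apply_mem hV.symm v⟩
  have hQA : ∀ v, Q (A v) = Q (A (Q v)) := fun v => by
    have h : v - Q v ∈ W := (hQ _).1 (by rw [map_sub, hQQ, sub_self])
    have h' := (hQ _).2 (hA _ h)
    rwa [map_sub, map_sub, sub_eq_zero] at h'
  have hy : ∀ s, HasDerivAt (fun s => Q (x s)) ((Q.comp A') (Q (x s))) s := fun s => by
    have h := Q.hasFDerivAt.comp_hasDerivAt s (hx s)
    rwa [map_add, (hQ _).2 (hw s), add_zero, hQA] at h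
  exact (hQ _).1 <| eq_zero_of_abs_deriv_le_mul_abs_self_of_eq_zero_right
    (fun s _ => (hy s).continuousAt.continuousWithinAt) (fun s _ => (hy s).hasDerivWithinAt)
    ((hQ _).2 ha) (fun s _ => (Q.comp A').le_opNorm _) t ⟨hat, le_rfl⟩

/-- **Invariance of the range of `B` for a linear control system** `x' = A x + B u`:
if `A (Im B) ⊆ Im B`, then every trajectory starting in `Im B` stays in `Im B` in
forward time. -/
theorem range_invariant_linear_control_system {n m : ℕ}
    (A : (Fin n → ℝ) →ₗ[ℝ] (Fin n → ℝ)) (B : (Fin m → ℝ) →ₗ[ℝ] (Fin n → ℝ))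
    (hAB : ∀ v ∈ LinearMap.range B, A v ∈ LinearMap.range B)
    (u : ℝ → Fin m → ℝ) (hu : Continuous u)
    (x : ℝ → Fin n → ℝ) (hx : ∀ t : ℝ, HasDerivAt x (A (x t) + B (u t)) t)
    (h0 : x 0 ∈ LinearMap.range B) :
    ∀ t : ℝ, 0 ≤ t → x t ∈ LinearMap.range B := by
  exact fun t ht =>
    Submodule.mem_of_hasDerivAt_of_invariant hAB (fun s => B.mem_range_self (u s)) hx h0 ht
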